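/- Let S be a finite alphabet and let L ⊆ S* be a right extendable language (i.e., for every w ∈ L there exists c ∈ S with wc ∈ L). Then the winning set W(L) ⊆ {A,B}* is right extendable; more precisely, for every nonempty a ∈ W(L) one has aA ∈ W(L). -/

import Mathlib

/-!
Word games (Salo–Törmä, "Playing with Subshifts").
The players' alphabet is `Bool`: player `A` is `false`, player `B` is `true`
(so that the order `A < B` is the order `false < true` on `Bool`).
-/

/-- Auxiliary function for the play of a finite ordered word game: the word built so far
is accumulated in the second argument, and at each step the player indicated by the
turn order picks the next letter as a function of the word built so far. -/
def playAux {S : Type*} (sA sB : List S → S) : List Bool → List S → List S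
  | [], w => w
  | b :: rest, w => playAux sA sB rest (w ++ [(if b then sB else sA) w])

/-- The play of the finite ordered word game with turn order `a`,
where `A` uses strategy `sA` and `B` uses strategy `sB`. -/
def play {S : Type*} (sA sB : List S → S) (a : List Bool) : List S :=
  playAux sA sB a []

/-- The winning set `W(X)` of a target set `X` of finite words: the set of turn orders
for which `A` has a winning strategy. -/
def Wset {S : Type*} (X : Set (List S)) : Set (List Bool) :=
  { a | ∃ sA : List S → S, ∀ sB : List S → S, play sA sB a ∈ X }

section Play

variable {S : Type*} {sA sA' sB sB' : List S → S}

theorem playAux_append (sA sB : List S → S) (a b : List Bool) (w : List S) :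
    playAux sA sB (a ++ b) w = playAux sA sB b (playAux sA sB a w) := by
  induction a generalizing w with
  | nil => rfl
  | cons _ _ ih => exact ih _

theorem play_append_singleton (sA sB : List S → S) (a : List Bool) (x : Bool) :
    play sA sB (a ++ [x]) = play sA sB a ++ [(if x then sB else sA) (play sA sB a)] :=
  playAux_append sA sB a [x] []

theorem length_play (sA sB : List S → S) (a : List Bool) :
    (play sA sB a).length = a.length := by
  induction a using List.reverseRecOn with
  | nil => rfl
  | append_singleton a x ih => simp [play_append_singleton, ih]

theorem play_congr {a : List Bool} (hA : ∀ w : List S, w.length < a.length → sA w = sA' w)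
    (hB : ∀ w : List S, w.length < a.length → sB w = sB' w) :
    play sA sB a = play sA' sB' a := by
  induction a using List.reverseRecOn with
  | nil => rfl
  | append_singleton a x ih =>
    simp only [List.length_append, List.length_singleton] at hA hB
    have prefix_eq : play sA sB a = play sA' sB' a :=
      ih (fun w hw => hA w (by omega)) (fun w hw => hB w (by omega))
    have length_lt : (play sA' sB' a).length < a.length + 1 := by simp [length_play]
    rw [play_append_singleton, play_append_singleton, prefix_eq]
    cases x
    · simp [hA _ length_lt]
    · simp [hB _ length_lt]

end Play

/-- Player `A` follows a winning strategy for `X` throughout `a` and spends the extra turn on a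
letter extending the resulting word into `Y`; the length of the current word tells `A` which of
the two to do. -/
theorem winningSet_rightExtendable_general {S : Type*} {X Y : Set (List S)}
    (hXY : ∀ w ∈ X, ∃ c : S, w ++ [c] ∈ Y) {a : List Bool} (ha : a ∈ Wset X) :
    a ++ [false] ∈ Wset Y := by
  obtain ⟨sA, sA_wins⟩ := ha
  have : Nonempty S := ⟨sA []⟩
  choose! ext ext_mem using hXY
  let sA' : List S → S := fun w => if w.length < a.length then sA w else ext w
  refine ⟨sA', fun sB => ?_⟩
  have play_eq : play sA' sB a = play sA sB a :=
    play_congr (fun _ hw => if_pos hw) (fun _ _ => rfl)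
  have last_letter : sA' (play sA sB a) = ext (play sA sB a) :=
    if_neg (length_play sA sB a).not_lt
  have play_append_eq :
      play sA' sB (a ++ [false]) = play sA sB a ++ [ext (play sA sB a)] := by
    simp [play_append_singleton, play_eq, last_letter]
  rw [play_append_eq]
  exact ext_mem _ (sA_wins sB)

/-- If `L ⊆ S*` is right extendable (every `w ∈ L` has `wc ∈ L` for
some letter `c`), then `W(L)` is right extendable: every nonempty `a ∈ W(L)`
satisfies `aA ∈ W(L)`. (Recall `A = false`.) -/
theorem winningSet_rightExtendable {S : Type*} [Fintype S] [Nonempty S]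
    (L : Set (List S)) (hL : ∀ w ∈ L, ∃ c : S, w ++ [c] ∈ L) :
    ∀ a ∈ Wset L, a ≠ [] → a ++ [false] ∈ Wset L :=
  fun _ ha _ => winningSet_rightExtendable_general hL ha
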